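/- Let (𝔤, [·,·], β) be a skew-Hom-Lie algebra, V a real vector space, φ : V → V an invertible linear map, and ρ : 𝔤 → gl(V) a representation of (𝔤, [·,·], β) on V with respect to φ. Fix integers k ≥ 1 and s ≥ 0, and for an alternating k-linear map η : 𝔤^k → V define the (k+1)-linear map d^s η by d^s η(x₁,…,x_{k+1}) = Σ_{i=1}^{k+1} (−1)^{i+1} φ^{k+1+s} ∘ ρ(x_i) ∘ φ^{−k−2−s} applied to η(β(x₁),…,x̂_i,…,β(x_{k+1})) + Σ_{i<j} (−1)^{i+j} η([x_i,x_j], β(x₁),…,x̂_i,…,x̂_j,…,β(x_{k+1})), where a hat denotes omission of that argument and φ^{−1} is the inverse of φ. Then d^s ∘ d^s = 0, i.e., for every alternating k-linear map η : 𝔤^k → V and all x₁,…,x_{k+2} ∈ 𝔤, d^s(d^s η)(x₁,…,x_{k+2}) = 0. -/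

import Mathlib

open Finset

/-- The coboundary operator `d^s` of a skew-Hom-Lie algebra with values in a
representation `(V, ρ, φ)`, sending a `(k+1)`-cochain `η` to the `(k+2)`-cochain
`d^s η (x₁,…,x_{k+2}) =
   Σ_i (−1)^{i+1} φ^{(k+1)+1+s} ρ(x_i) φ^{−(k+1)−2−s} η(β x₁,…,x̂_i,…,β x_{k+2})
 + Σ_{i<j} (−1)^{i+j} η([x_i,x_j], β x₁,…,x̂_i,…,x̂_j,…,β x_{k+2})`
(signs written here for 1-based indices as in the paper; below indices are 0-based,
so the signs appear as `(−1)^i` and `(−1)^{i+j}`). -/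
noncomputable def dCob {𝔤 V : Type*} [AddCommGroup 𝔤] [Module ℝ 𝔤]
    [AddCommGroup V] [Module ℝ V]
    (b : 𝔤 →ₗ[ℝ] 𝔤 →ₗ[ℝ] 𝔤) (β : 𝔤 →ₗ[ℝ] 𝔤)
    (φ : V ≃ₗ[ℝ] V) (ρ : 𝔤 →ₗ[ℝ] Module.End ℝ V) (k s : ℕ)
    (η : (Fin (k + 1) → 𝔤) → V) : (Fin (k + 2) → 𝔤) → V :=
  fun x =>
    (∑ i : Fin (k + 2), ((-1 : ℝ) ^ (i : ℕ)) •
      (φ ^ ((k : ℤ) + 2 + (s : ℤ)))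
        ((ρ (x i))
          ((φ ^ (-((k : ℤ) + 3 + (s : ℤ))))
            (η (fun l => β (x (i.succAbove l)))))))
    + ∑ i : Fin (k + 2), ∑ j : Fin (k + 2),
        if h : i < j then
          ((-1 : ℝ) ^ ((i : ℕ) + (j : ℕ))) •
            η (Fin.cons (b (x i) (x j))
                (fun l : Fin k =>
                  β (x (i.succAbove ((j.pred (Fin.pos_iff_ne_zero.mp
                        (lt_of_le_of_lt (Fin.zero_le i) h))).succAbove l)))))
        else 0

/-!
The argument is Cartan calculus. Write `ι_y` for the interior product, `L_y` for the Lie derivative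
and `d` for the differential, with coefficients acting through `A`, and write `L'`, `d'` for the
operators with coefficients acting through `A' = -A ∘ β`. Interior products detect equality of
alternating maps, and they satisfy

* `ι_z L_y = L_y ι_{βz} - β^* ι_{[y,z]}`,
* `ι_y d = L_y - d ι_{βy}` (Cartan's formula).

By induction on the degree, contracting both sides, `β [x, y] = -[β x, β y]` gives
`β^* L_{βy} = -L'_y β^*` and `β^* d = -d' β^*`, while the Hom-Jacobi identity together with the
representation identity gives `L'_y L_{βz} - L'_z L_{βy} = β^* L_{[y,z]}`. The same induction then
yields `L'_y d = d' L_{βy}`, and finally `d' d = 0`, since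
`ι_y d' d = L'_y d - d' ι_{βy} d = d' (L_{βy} - ι_{βy} d) = d' d ι_{β²y}`.

The powers of `φ` in `d^s` enter only through `A_m = φ^m ∘ ρ ∘ φ^{-(m+1)}`. Since
`-A_m ∘ β = A_{m+1}`, the second of two successive differentials is the `d'` of the first.
-/

namespace SkewHomLie

theorem sum_sum_dite_lt {V : Type*} [AddCommMonoid V] {n : ℕ}
    (G : Fin (n + 1) → Fin (n + 1) → Fin n → V) :
    (∑ i, ∑ j, if h : i < j then G i j (j.pred (Fin.ne_zero_of_lt h)) else 0)
      = ∑ i : Fin n, ∑ j ≥ i, G i.castSucc j.succ j := by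
  simp only [Fin.sum_univ_succ (n := n) (f := fun _ => dite _ _ _), Fin.sum_univ_castSucc (n := n)]
  simp [← Finset.filter_le_eq_Ici, Finset.sum_filter, Fin.castSucc_lt_succ_iff,
    (Fin.le_last _).not_gt]

section Contraction

variable {R M N V : Type*} [CommRing R] [AddCommGroup M] [Module R M] [AddCommGroup N] [Module R N]
  [AddCommGroup V] [Module R V] {n : ℕ}

/-- The interior product `ι_y`, as a bilinear map. -/
def contract : M →ₗ[R] M [⋀^Fin (n + 1)]→ₗ[R] V →ₗ[R] M [⋀^Fin n]→ₗ[R] V :=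
  AlternatingMap.curryLeftLinearMap.flip

/-- The pullback `f^*` of alternating maps, as a linear map. -/
def pullback (f : M →ₗ[R] N) : N [⋀^Fin n]→ₗ[R] V →ₗ[R] M [⋀^Fin n]→ₗ[R] V where
  toFun η := η.compLinearMap f
  map_add' η ξ := η.add_compLinearMap ξ f
  map_smul' _ _ := rfl

theorem contract_apply (y : M) (η : M [⋀^Fin (n + 1)]→ₗ[R] V) (x : Fin n → M) :
    contract y η x = η (Fin.cons y x) := rfl

theorem pullback_apply (f : M →ₗ[R] N) (η : N [⋀^Fin n]→ₗ[R] V) (x : Fin n → M) :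
    pullback f η x = η (fun i => f (x i)) := rfl

theorem ext_contract {η ξ : M [⋀^Fin (n + 1)]→ₗ[R] V} (h : ∀ y, contract y η = contract y ξ) :
    η = ξ := by
  ext x
  simpa only [contract_apply, Fin.cons_self_tail] using DFunLike.congr_fun (h (x 0)) (Fin.tail x)

theorem contract_contract_swap (y z : M) (η : M [⋀^Fin (n + 2)]→ₗ[R] V) :
    contract z (contract y η) = -contract y (contract z η) := by
  have h : contract (y + z) (contract (y + z) η) = 0 := η.curryLeft_same (y + z)
  have hy : contract y (contract y η) = 0 := η.curryLeft_same y
  have hz : contract z (contract z η) = 0 := η.curryLeft_same z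
  simp only [map_add, LinearMap.add_apply, hy, hz, zero_add, add_zero] at h
  exact eq_neg_of_add_eq_zero_left h

theorem contract_pullback (f : M →ₗ[R] N) (y : M) (η : N [⋀^Fin (n + 1)]→ₗ[R] V) :
    contract y (pullback f η) = pullback f (contract (f y) η) :=
  AlternatingMap.curryLeft_compLinearMap f η y

theorem contract_alternatizeUncurryFin_zero (f : M →ₗ[R] M [⋀^Fin 0]→ₗ[R] V) (y : M) :
    contract y (AlternatingMap.alternatizeUncurryFin f) = f y := by
  ext x
  simp [contract_apply, AlternatingMap.alternatizeUncurryFin_apply]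

theorem contract_alternatizeUncurryFin_succ (f : M →ₗ[R] M [⋀^Fin (n + 1)]→ₗ[R] V) (y : M) :
    contract y (AlternatingMap.alternatizeUncurryFin f)
      = f y - AlternatingMap.alternatizeUncurryFin (contract y ∘ₗ f) := by
  ext x
  have hx (i : Fin (n + 1)) : i.succ.removeNth (Fin.cons y x : Fin (n + 2) → M)
      = Fin.cons y (i.removeNth x) := by
    ext l
    cases l using Fin.cases <;> simp [Fin.removeNth_apply]
  simp only [contract_apply, AlternatingMap.alternatizeUncurryFin_apply, AlternatingMap.sub_apply,
    LinearMap.comp_apply]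
  rw [Fin.sum_univ_succ, sub_eq_add_neg, ← Finset.sum_neg_distrib]
  simp [hx, pow_succ]

end Contraction

/-- A bracket `b` and a structure map `β` that make up a skew-Hom-Lie algebra. -/
structure IsSkewHomLie {R 𝔤 : Type*} [CommRing R] [AddCommGroup 𝔤] [Module R 𝔤]
    (b : 𝔤 →ₗ[R] 𝔤 →ₗ[R] 𝔤) (β : 𝔤 →ₗ[R] 𝔤) : Prop where
  skew (x y : 𝔤) : b x y = -b y x
  map_bracket (x y : 𝔤) : β (b x y) = -b (β x) (β y)
  jacobi (x y z : 𝔤) : b (b y z) (β x) + b (b z x) (β y) + b (b x y) (β z) = 0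

section LieDerivative

variable {R 𝔤 V : Type*} [CommRing R] [AddCommGroup 𝔤] [Module R 𝔤] [AddCommGroup V] [Module R V]
  {b : 𝔤 →ₗ[R] 𝔤 →ₗ[R] 𝔤} {β : 𝔤 →ₗ[R] 𝔤} {A : 𝔤 →ₗ[R] Module.End R V} {n : ℕ}

/-- The coefficient part `η ↦ A y ∘ β^* η` of the Lie derivative along `y`. -/
def coeffDeriv (β : 𝔤 →ₗ[R] 𝔤) (A : 𝔤 →ₗ[R] Module.End R V) (n : ℕ) :
    𝔤 →ₗ[R] 𝔤 [⋀^Fin n]→ₗ[R] V →ₗ[R] 𝔤 [⋀^Fin n]→ₗ[R] V :=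
  LinearMap.mk₂ R (fun y η => (A y).compAlternatingMap (pullback β η))
    (fun y z η => by ext; simp) (fun c y η => by ext; simp)
    (fun y η ξ => by ext; simp) (fun c y η => by ext; simp)

/-- The argument part of the Lie derivative along `y`: it sends `η` to
`x ↦ ∑ i, η (β x₁, …, [y, x_i], …, β x_n)`. Moving `[y, x_i]` to the front writes the sum as the
alternatization of `z ↦ β^* ι_[y,z] η`, which is alternating by construction. -/
def argDeriv (b : 𝔤 →ₗ[R] 𝔤 →ₗ[R] 𝔤) (β : 𝔤 →ₗ[R] 𝔤) :
    (n : ℕ) → 𝔤 →ₗ[R] 𝔤 [⋀^Fin n]→ₗ[R] V →ₗ[R] 𝔤 [⋀^Fin n]→ₗ[R] V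
  | 0 => 0
  | _ + 1 => LinearMap.mk₂ R
      (fun y η => AlternatingMap.alternatizeUncurryFin (pullback β ∘ₗ η.curryLeft ∘ₗ b y))
      (fun y z η => by simp [LinearMap.comp_add])
      (fun c y η => by simp [LinearMap.comp_smul])
      (fun y η ξ => by simp [LinearMap.add_comp, LinearMap.comp_add])
      (fun c y η => by simp [LinearMap.smul_comp, LinearMap.comp_smul])

/-- The Lie derivative `L_y` on alternating maps with coefficients twisted by `A`. -/
def lieDeriv (b : 𝔤 →ₗ[R] 𝔤 →ₗ[R] 𝔤) (β : 𝔤 →ₗ[R] 𝔤) (A : 𝔤 →ₗ[R] Module.End R V) (n : ℕ) :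
    𝔤 →ₗ[R] 𝔤 [⋀^Fin n]→ₗ[R] V →ₗ[R] 𝔤 [⋀^Fin n]→ₗ[R] V :=
  coeffDeriv β A n - argDeriv b β n

theorem contract_coeffDeriv (y z : 𝔤) (η : 𝔤 [⋀^Fin (n + 1)]→ₗ[R] V) :
    contract z (coeffDeriv β A (n + 1) y η) = coeffDeriv β A n y (contract (β z) η) :=
  congrArg (A y).compAlternatingMap (contract_pullback β z η)

theorem contract_argDeriv (y z : 𝔤) (η : 𝔤 [⋀^Fin (n + 1)]→ₗ[R] V) :
    contract z (argDeriv b β (n + 1) y η)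
      = pullback β (contract (b y z) η) + argDeriv b β n y (contract (β z) η) := by
  cases n with
  | zero => exact (contract_alternatizeUncurryFin_zero _ z).trans (add_zero _).symm
  | succ n =>
    have swap : contract z ∘ₗ pullback β ∘ₗ η.curryLeft ∘ₗ b y
        = -(pullback β ∘ₗ (contract (β z) η).curryLeft ∘ₗ b y) := by
      ext1 w
      refine (contract_pullback β z _).trans ?_
      exact (congrArg (pullback β) (contract_contract_swap (b y w) (β z) η)).trans (map_neg _ _)
    refine (contract_alternatizeUncurryFin_succ _ z).trans ?_
    rw [swap, ← AlternatingMap.alternatizeUncurryFinLM_apply, map_neg, sub_neg_eq_add]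
    rfl

theorem contract_lieDeriv (y z : 𝔤) (η : 𝔤 [⋀^Fin (n + 1)]→ₗ[R] V) :
    contract z (lieDeriv b β A (n + 1) y η)
      = lieDeriv b β A n y (contract (β z) η) - pullback β (contract (b y z) η) := by
  simp only [lieDeriv, LinearMap.sub_apply, map_sub, contract_coeffDeriv, contract_argDeriv]
  abel

theorem lieDeriv_zero_apply (y : 𝔤) (η : 𝔤 [⋀^Fin 0]→ₗ[R] V) (x : Fin 0 → 𝔤) :
    lieDeriv b β A 0 y η x = A y (η x) :=
  (sub_zero _).trans (congrArg (fun v => A y (η v)) (Subsingleton.elim _ _))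

theorem pullback_lieDeriv (h : IsSkewHomLie b β) (y : 𝔤) (η : 𝔤 [⋀^Fin n]→ₗ[R] V) :
    pullback β (lieDeriv b β A n (β y) η)
      = -lieDeriv b β (-(A ∘ₗ β)) n y (pullback β η) := by
  induction n with
  | zero =>
    ext x
    simp [pullback_apply, lieDeriv_zero_apply, Subsingleton.elim (fun i => β (x i)) x]
  | succ n ih =>
    refine ext_contract fun z => ?_
    simp only [contract_pullback, contract_lieDeriv, map_sub, map_neg, ih, h.map_bracket,
      LinearMap.neg_apply]
    abel

theorem IsSkewHomLie.bracket_bracket (h : IsSkewHomLie b β) (y z w : 𝔤) :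
    b (b y z) (β w) = b (β y) (b z w) - b (β z) (b y w) := by
  have hjac := h.jacobi w y z
  rw [h.skew (b z w), h.skew (b w y), h.skew w y, map_neg] at hjac
  rw [← sub_eq_zero, ← hjac]
  abel

theorem lieDeriv_lieDeriv_sub (h : IsSkewHomLie b β)
    (hA : ∀ x y, A (b x y) = -⁅A (β x), A (β y)⁆) (y z : 𝔤) (η : 𝔤 [⋀^Fin n]→ₗ[R] V) :
    lieDeriv b β (-(A ∘ₗ β)) n y (lieDeriv b β A n (β z) η)
        - lieDeriv b β (-(A ∘ₗ β)) n z (lieDeriv b β A n (β y) η)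
      = pullback β (lieDeriv b β A n (b y z) η) := by
  induction n with
  | zero =>
    ext x
    simp only [AlternatingMap.sub_apply, pullback_apply, lieDeriv_zero_apply, hA, Ring.lie_def,
      LinearMap.neg_apply, LinearMap.sub_apply, LinearMap.comp_apply, Module.End.mul_apply,
      Subsingleton.elim (fun i => β (x i)) x]
    abel
  | succ n ih =>
    refine ext_contract fun w => ?_
    simp only [contract_pullback, map_sub, map_neg, contract_lieDeriv, LinearMap.sub_apply,
      LinearMap.neg_apply, h.bracket_bracket, h.map_bracket, ← ih, pullback_lieDeriv h]
    abel

end LieDerivative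

section Coboundary

variable {R 𝔤 V : Type*} [CommRing R] [AddCommGroup 𝔤] [Module R 𝔤] [AddCommGroup V] [Module R V]
  {b : 𝔤 →ₗ[R] 𝔤 →ₗ[R] 𝔤} {β : 𝔤 →ₗ[R] 𝔤} {A : 𝔤 →ₗ[R] Module.End R V} {n : ℕ}

/-- The coefficient part of the coboundary, with values
`∑ i, (-1) ^ i • A x_i (η (β x₁, …, x̂_i, …, β x_{n+1}))`. -/
def coeffDiff (β : 𝔤 →ₗ[R] 𝔤) (A : 𝔤 →ₗ[R] Module.End R V) (n : ℕ) :
    𝔤 [⋀^Fin n]→ₗ[R] V →ₗ[R] 𝔤 [⋀^Fin (n + 1)]→ₗ[R] V :=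
  AlternatingMap.alternatizeUncurryFinLM ∘ₗ (coeffDeriv β A n).flip

/-- The bracket part of the coboundary, up to sign. Alternatizing `argDeriv` meets each pair
`i < j` twice, whence the factor `1 / 2`. -/
def argDiff [Invertible (2 : R)] (b : 𝔤 →ₗ[R] 𝔤 →ₗ[R] 𝔤) (β : 𝔤 →ₗ[R] 𝔤) (n : ℕ) :
    𝔤 [⋀^Fin n]→ₗ[R] V →ₗ[R] 𝔤 [⋀^Fin (n + 1)]→ₗ[R] V :=
  (⅟2 : R) • (AlternatingMap.alternatizeUncurryFinLM ∘ₗ (argDeriv b β n).flip)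

/-- The Chevalley–Eilenberg differential on alternating maps with coefficients twisted by `A`. -/
def coboundary [Invertible (2 : R)] (b : 𝔤 →ₗ[R] 𝔤 →ₗ[R] 𝔤) (β : 𝔤 →ₗ[R] 𝔤)
    (A : 𝔤 →ₗ[R] Module.End R V) (n : ℕ) :
    𝔤 [⋀^Fin n]→ₗ[R] V →ₗ[R] 𝔤 [⋀^Fin (n + 1)]→ₗ[R] V :=
  coeffDiff β A n - argDiff b β n

theorem coeffDiff_apply (η : 𝔤 [⋀^Fin n]→ₗ[R] V) (x : Fin (n + 1) → 𝔤) :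
    coeffDiff β A n η x
      = ∑ i : Fin (n + 1), (-1 : R) ^ (i : ℕ) • A (x i) (η fun l => β (x (i.succAbove l))) := by
  refine (AlternatingMap.alternatizeUncurryFin_apply _ x).trans ?_
  refine Finset.sum_congr rfl fun i _ => ?_
  rw [← Int.cast_smul_eq_zsmul R, Int.cast_pow, Int.cast_neg, Int.cast_one]
  rfl

theorem argDiff_apply [Invertible (2 : R)] (hskew : ∀ x y, b x y = -b y x)
    (η : 𝔤 [⋀^Fin (n + 1)]→ₗ[R] V) (x : Fin (n + 2) → 𝔤) :
    argDiff b β (n + 1) η x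
      = ∑ i : Fin (n + 1), ∑ j ≥ i, (-1 : R) ^ (i + j : ℕ) •
          η (Fin.cons (b (x i.castSucc) (x j.succ))
            fun l => β (x (i.castSucc.succAbove (j.succAbove l)))) := by
  let F : 𝔤 →ₗ[R] 𝔤 →ₗ[R] 𝔤 [⋀^Fin n]→ₗ[R] V := b.compr₂ (pullback β ∘ₗ η.curryLeft)
  have hF (y z : 𝔤) : F y z - F z y = (2 : R) • F y z := by
    simp [F, hskew z y, two_smul]
  change (⅟2 : R) • AlternatingMap.alternatizeUncurryFin
    (AlternatingMap.alternatizeUncurryFinLM ∘ₗ F) x = _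
  rw [AlternatingMap.alternatizeUncurryFin_alternatizeUncurryFinLM_comp_apply, Finset.smul_sum]
  refine Finset.sum_congr rfl fun i _ => ?_
  rw [Finset.smul_sum]
  refine Finset.sum_congr rfl fun j _ => ?_
  rw [← AlternatingMap.sub_apply, hF, AlternatingMap.smul_apply, ← Int.cast_smul_eq_zsmul R,
    smul_comm, invOf_smul_smul, Int.cast_pow, Int.cast_neg, Int.cast_one]
  rfl

theorem contract_coeffDiff_succ (y : 𝔤) (η : 𝔤 [⋀^Fin (n + 1)]→ₗ[R] V) :
    contract y (coeffDiff β A (n + 1) η)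
      = coeffDeriv β A (n + 1) y η - coeffDiff β A n (contract (β y) η) := by
  refine (contract_alternatizeUncurryFin_succ _ y).trans ?_
  have hcomp : contract y ∘ₗ (coeffDeriv β A (n + 1)).flip η
      = (coeffDeriv β A n).flip (contract (β y) η) :=
    LinearMap.ext fun z => contract_coeffDeriv z y η
  rw [hcomp]
  rfl

theorem contract_argDiff_succ [Invertible (2 : R)] (hskew : ∀ x y, b x y = -b y x) (y : 𝔤)
    (η : 𝔤 [⋀^Fin (n + 1)]→ₗ[R] V) :
    contract y (argDiff b β (n + 1) η)
      = argDeriv b β (n + 1) y η - argDiff b β n (contract (β y) η) := by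
  have hcomp : contract y ∘ₗ (argDeriv b β (n + 1)).flip η
      = (argDeriv b β n).flip (contract (β y) η) - pullback β ∘ₗ η.curryLeft ∘ₗ b y := by
    ext1 z
    have hz : pullback β (contract (b z y) η) = -pullback β (η.curryLeft (b y z)) := by
      rw [hskew z y, map_neg, LinearMap.neg_apply, map_neg]
      rfl
    refine (contract_argDeriv z y η).trans ?_
    rw [hz, neg_add_eq_sub]
    rfl
  have htwice : contract y (AlternatingMap.alternatizeUncurryFinLM
        ((argDeriv b β (n + 1)).flip η))
      = (2 : R) • argDeriv b β (n + 1) y η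
        - AlternatingMap.alternatizeUncurryFinLM ((argDeriv b β n).flip (contract (β y) η)) := by
    refine (contract_alternatizeUncurryFin_succ _ y).trans ?_
    rw [hcomp, ← AlternatingMap.alternatizeUncurryFinLM_apply, map_sub, two_smul,
      sub_sub_eq_add_sub]
    rfl
  rw [argDiff, LinearMap.smul_apply, map_smul, LinearMap.comp_apply, htwice, smul_sub,
    invOf_smul_smul]
  rfl

variable [Invertible (2 : R)]

theorem contract_coboundary_zero (y : 𝔤) (η : 𝔤 [⋀^Fin 0]→ₗ[R] V) :
    contract y (coboundary b β A 0 η) = lieDeriv b β A 0 y η := by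
  have hcoeff : contract y (coeffDiff β A 0 η) = coeffDeriv β A 0 y η :=
    contract_alternatizeUncurryFin_zero _ y
  have harg : argDiff b β 0 η = 0 := by
    ext
    simp [argDiff, argDeriv, AlternatingMap.alternatizeUncurryFin_apply]
  rw [coboundary, LinearMap.sub_apply, harg, sub_zero, hcoeff]
  exact (sub_zero _).symm

theorem contract_coboundary_succ (hskew : ∀ x y, b x y = -b y x) (y : 𝔤)
    (η : 𝔤 [⋀^Fin (n + 1)]→ₗ[R] V) :
    contract y (coboundary b β A (n + 1) η)
      = lieDeriv b β A (n + 1) y η - coboundary b β A n (contract (β y) η) := by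
  simp only [coboundary, lieDeriv, LinearMap.sub_apply, map_sub, contract_coeffDiff_succ,
    contract_argDiff_succ hskew]
  abel

theorem pullback_coboundary (h : IsSkewHomLie b β) (η : 𝔤 [⋀^Fin n]→ₗ[R] V) :
    pullback β (coboundary b β A n η) = -coboundary b β (-(A ∘ₗ β)) n (pullback β η) := by
  induction n with
  | zero =>
    refine ext_contract fun y => ?_
    rw [contract_pullback, contract_coboundary_zero, map_neg, contract_coboundary_zero,
      pullback_lieDeriv h]
  | succ n ih =>
    refine ext_contract fun y => ?_
    rw [contract_pullback, contract_coboundary_succ h.skew, map_neg,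
      contract_coboundary_succ h.skew, map_sub, ih, pullback_lieDeriv h, contract_pullback]
    abel

theorem lieDeriv_coboundary (h : IsSkewHomLie b β)
    (hA : ∀ x y, A (b x y) = -⁅A (β x), A (β y)⁆) (y : 𝔤) (η : 𝔤 [⋀^Fin n]→ₗ[R] V) :
    lieDeriv b β (-(A ∘ₗ β)) (n + 1) y (coboundary b β A n η)
      = coboundary b β (-(A ∘ₗ β)) n (lieDeriv b β A n (β y) η) := by
  induction n with
  | zero =>
    refine ext_contract fun z => ?_
    rw [contract_lieDeriv, contract_coboundary_zero, contract_coboundary_zero,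
      contract_coboundary_zero, ← lieDeriv_lieDeriv_sub h hA]
    abel
  | succ n ih =>
    refine ext_contract fun z => ?_
    simp only [contract_lieDeriv, contract_coboundary_succ h.skew, map_sub, map_neg, ih,
      ← lieDeriv_lieDeriv_sub h hA, h.map_bracket, LinearMap.neg_apply, pullback_coboundary h]
    abel

theorem coboundary_coboundary (h : IsSkewHomLie b β)
    (hA : ∀ x y, A (b x y) = -⁅A (β x), A (β y)⁆) (η : 𝔤 [⋀^Fin n]→ₗ[R] V) :
    coboundary b β (-(A ∘ₗ β)) (n + 1) (coboundary b β A n η) = 0 := by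
  induction n with
  | zero =>
    refine ext_contract fun y => ?_
    rw [contract_coboundary_succ h.skew, lieDeriv_coboundary h hA, contract_coboundary_zero,
      sub_self, map_zero]
  | succ n ih =>
    refine ext_contract fun y => ?_
    rw [contract_coboundary_succ h.skew, lieDeriv_coboundary h hA,
      contract_coboundary_succ h.skew, map_sub, ih, sub_zero, sub_self, map_zero]

end Coboundary

section Twist

variable {R 𝔤 V : Type*} [CommRing R] [AddCommGroup 𝔤] [Module R 𝔤] [AddCommGroup V] [Module R V]
  {b : 𝔤 →ₗ[R] 𝔤 →ₗ[R] 𝔤} {β : 𝔤 →ₗ[R] 𝔤} {φ : V ≃ₗ[R] V} {ρ : 𝔤 →ₗ[R] Module.End R V}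

/-- The twisted action `φ^m ∘ ρ(x) ∘ φ^{-(m+1)}`; the differential `d^s` on `k`-cochains uses
`m = k + 1 + s`. -/
def twist (φ : V ≃ₗ[R] V) (ρ : 𝔤 →ₗ[R] Module.End R V) (m : ℤ) : 𝔤 →ₗ[R] Module.End R V where
  toFun x := (φ ^ m).toLinearMap ∘ₗ ρ x ∘ₗ (φ ^ (-(m + 1))).toLinearMap
  map_add' x y := by ext; simp
  map_smul' c x := by ext; simp

theorem twist_apply (m : ℤ) (x : 𝔤) (v : V) :
    twist φ ρ m x v = (φ ^ m) (ρ x ((φ ^ (-(m + 1))) v)) := rfl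

theorem zpow_add_one_apply (m : ℤ) (v : V) : (φ ^ (m + 1)) v = (φ ^ m) (φ v) := by
  rw [zpow_add_one, LinearEquiv.mul_apply]

theorem zpow_neg_eq_apply (m : ℤ) (v : V) : (φ ^ (-m)) v = φ ((φ ^ (-(m + 1))) v) := by
  rw [← LinearEquiv.mul_apply, ← zpow_one_add]
  congr 2
  ring

theorem twist_add_one
    (hφ : ∀ x : 𝔤, ρ (β x) * φ.toLinearMap = -(φ.toLinearMap * ρ x)) (m : ℤ) :
    twist φ ρ (m + 1) = -(twist φ ρ m ∘ₗ β) := by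
  ext x v
  have hv (w : V) : ρ (β x) (φ w) = -φ (ρ x w) := LinearMap.congr_fun (hφ x) w
  simp only [LinearMap.neg_apply, LinearMap.comp_apply, twist_apply]
  rw [zpow_neg_eq_apply (m + 1), hv, map_neg, neg_neg, zpow_add_one_apply]

theorem twist_bracket
    (hφ : ∀ x : 𝔤, ρ (β x) * φ.toLinearMap = -(φ.toLinearMap * ρ x))
    (hρ : ∀ x y : 𝔤, ρ (b x y) * φ.toLinearMap = ρ (β x) * ρ y - ρ (β y) * ρ x)
    (m : ℤ) (x y : 𝔤) :
    twist φ ρ m (b x y) = -⁅twist φ ρ m (β x), twist φ ρ m (β y)⁆ := by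
  have hmul (x y : 𝔤) (v : V) : twist φ ρ m (β x) (twist φ ρ m (β y) v)
      = -(φ ^ m) (ρ (β x) (ρ y ((φ ^ (-(m + 1 + 1))) v))) := by
    have hy : twist φ ρ m (β y) = -twist φ ρ (m + 1) y := by
      rw [twist_add_one hφ]
      simp
    rw [hy, LinearMap.neg_apply, map_neg, twist_apply, twist_apply, ← LinearEquiv.mul_apply,
      ← zpow_add, neg_add_cancel, zpow_zero, LinearEquiv.coe_one, id]
  ext v
  have hv (w : V) : ρ (b x y) (φ w) = ρ (β x) (ρ y w) - ρ (β y) (ρ x w) :=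
    LinearMap.congr_fun (hρ x y) w
  rw [Ring.lie_def, LinearMap.neg_apply, LinearMap.sub_apply, Module.End.mul_apply,
    Module.End.mul_apply, hmul, hmul, twist_apply, zpow_neg_eq_apply, hv, map_sub]
  abel

end Twist

theorem dCob_eq_coboundary {𝔤 V : Type*} [AddCommGroup 𝔤] [Module ℝ 𝔤] [AddCommGroup V]
    [Module ℝ V] {b : 𝔤 →ₗ[ℝ] 𝔤 →ₗ[ℝ] 𝔤} {β : 𝔤 →ₗ[ℝ] 𝔤} {φ : V ≃ₗ[ℝ] V}
    {ρ : 𝔤 →ₗ[ℝ] Module.End ℝ V} (hskew : ∀ x y, b x y = -b y x) (k s : ℕ)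
    (η : 𝔤 [⋀^Fin (k + 1)]→ₗ[ℝ] V) :
    dCob b β φ ρ k s η = coboundary b β (twist φ ρ (k + 2 + s)) (k + 1) η := by
  funext x
  have hsign (i j : Fin (k + 1)) :
      (-1 : ℝ) ^ ((i.castSucc : ℕ) + (j.succ : ℕ)) = -(-1) ^ (i + j : ℕ) := by
    rw [Fin.val_castSucc, Fin.val_succ, ← add_assoc, pow_succ, mul_neg_one]
  have hsum := sum_sum_dite_lt fun (i j : Fin (k + 2)) (l : Fin (k + 1)) =>
    (-1 : ℝ) ^ (i + j : ℕ) •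
      η (Fin.cons (b (x i) (x j)) fun p => β (x (i.succAbove (l.succAbove p))))
  simp only [hsign, neg_smul, Finset.sum_neg_distrib] at hsum
  have hexp : -((k : ℤ) + 3 + s) = -((k : ℤ) + 2 + s + 1) := by ring
  rw [coboundary, LinearMap.sub_apply, AlternatingMap.sub_apply, coeffDiff_apply,
    argDiff_apply hskew, sub_eq_add_neg, ← hsum, dCob, hexp]
  rfl

end SkewHomLie

open SkewHomLie in
theorem dCob_dCob_eq_zero_general {R 𝔤 V : Type*} [CommRing R] [Invertible (2 : R)]
    [AddCommGroup 𝔤] [Module R 𝔤] [AddCommGroup V] [Module R V]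
    {b : 𝔤 →ₗ[R] 𝔤 →ₗ[R] 𝔤} {β : 𝔤 →ₗ[R] 𝔤} (h : IsSkewHomLie b β)
    {φ : V ≃ₗ[R] V} {ρ : 𝔤 →ₗ[R] Module.End R V}
    (hφ : ∀ x, ρ (β x) * φ.toLinearMap = -(φ.toLinearMap * ρ x))
    (hρ : ∀ x y, ρ (b x y) * φ.toLinearMap = ρ (β x) * ρ y - ρ (β y) * ρ x)
    (m : ℤ) {n : ℕ} (η : 𝔤 [⋀^Fin n]→ₗ[R] V) :
    coboundary b β (twist φ ρ (m + 1)) (n + 1) (coboundary b β (twist φ ρ m) n η) = 0 := by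
  rw [twist_add_one hφ]
  exact coboundary_coboundary h (twist_bracket hφ hρ m) η

/-- for a representation `ρ` of a skew-Hom-Lie algebra `(𝔤,[·,·],β)`
on `V` with respect to an invertible `φ`, the operator `d^s` squares to zero on
alternating `(k+1)`-cochains (`k+1 ≥ 1`). -/
theorem dCob_dCob_eq_zero
    {𝔤 V : Type*} [AddCommGroup 𝔤] [Module ℝ 𝔤] [AddCommGroup V] [Module ℝ V]
    (b : 𝔤 →ₗ[ℝ] 𝔤 →ₗ[ℝ] 𝔤) (hskew : ∀ x y : 𝔤, b x y = - b y x)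
    (β : 𝔤 →ₗ[ℝ] 𝔤)
    (hβ : ∀ x y : 𝔤, β (b x y) = - b (β x) (β y))
    (hjac : ∀ x y z : 𝔤, b (b y z) (β x) + b (b z x) (β y) + b (b x y) (β z) = 0)
    (φ : V ≃ₗ[ℝ] V) (ρ : 𝔤 →ₗ[ℝ] Module.End ℝ V)
    (hrep1 : ∀ x : 𝔤, ρ (β x) * (φ.toLinearMap : Module.End ℝ V)
        = -((φ.toLinearMap : Module.End ℝ V) * ρ x))
    (hrep2 : ∀ x y : 𝔤, ρ (b x y) * (φ.toLinearMap : Module.End ℝ V)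
        = ρ (β x) * ρ y - ρ (β y) * ρ x)
    (k s : ℕ) (η : AlternatingMap ℝ 𝔤 V (Fin (k + 1)))
    (x : Fin (k + 3) → 𝔤) :
    dCob b β φ ρ (k + 1) s (dCob b β φ ρ k s ⇑η) x = 0 := by
  have hexp : ((k + 1 : ℕ) : ℤ) + 2 + s = (k + 2 + s : ℤ) + 1 := by push_cast; ring
  rw [SkewHomLie.dCob_eq_coboundary hskew, SkewHomLie.dCob_eq_coboundary hskew, hexp,
    dCob_dCob_eq_zero_general ⟨hskew, hβ, hjac⟩ hrep1 hrep2, AlternatingMap.zero_apply]
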